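/- Let $d \in \mathbb{N}$, let $K \subseteq \mathbb{R}^d$ be a compact set, and let $(H_\varepsilon)$ and $(H'_\varepsilon)$ be two nets of smooth functions on $\mathbb{R}^d \times \mathbb{R}^d$ supported in $K \times K$, both of logarithmic type (for every compact $A$ and every $l$, $p_{A,l}(H_\varepsilon) = O(|\ln \varepsilon|)$ and $p_{A,l}(H'_\varepsilon) = O(|\ln \varepsilon|)$ as $\varepsilon \to 0$), whose difference $(H_\varepsilon - H'_\varepsilon)$ is negligible. Let $S_\varepsilon$ and $S'_\varepsilon$ be the corresponding exponential kernels, i.e. $S_\varepsilon = \sum_{n=1}^{\infty} \frac{L_{n,\varepsilon}}{n!}$ with $L_{1,\varepsilon} = H_\varepsilon$ and $L_{n+1,\varepsilon}(x,y) = \int_K H_\varepsilon(x,\xi) L_{n,\varepsilon}(\xi,y)\, \mathrm{d}\xi$, and similarly for $S'_\varepsilon$ from $H'_\varepsilon$. Then the net $(S_\varepsilon - S'_\varepsilon)$ is negligible. -/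

import Mathlib

open MeasureTheory Set Filter

noncomputable def dirDeriv {E : Type*} [NormedAddCommGroup E] [NormedSpace ℝ E]
    (v : E) (f : E → ℂ) : E → ℂ := fun x => fderiv ℝ f x v

noncomputable def itDeriv {E : Type*} [NormedAddCommGroup E] [NormedSpace ℝ E] :
    List E → (E → ℂ) → E → ℂ
  | [] => fun f => f
  | v :: vs => fun f => itDeriv vs (dirDeriv v f)

/-- The standard basis directions of the product space `ℝ^m × ℝ^n`. -/
def prodDirs (m n : ℕ) : Set ((Fin m → ℝ) × (Fin n → ℝ)) :=
  {v | (∃ i, v = (Pi.single i (1:ℝ), 0)) ∨ ∃ j, v = (0, Pi.single j (1:ℝ))}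

/-- The standard basis directions of `ℝ^d`. -/
def stdDirs (d : ℕ) : Set (Fin d → ℝ) := {v | ∃ i, v = Pi.single i (1:ℝ)}

/-- The seminorm `p_{A,l}(f)`: the sup over `x ∈ A` and over all partial derivatives
(iterated directional derivatives along basis directions from `B`) of order `≤ l`. -/
noncomputable def pSemi {E : Type*} [NormedAddCommGroup E] [NormedSpace ℝ E]
    (B A : Set E) (l : ℕ) (f : E → ℂ) : ℝ :=
  sSup {r | ∃ vs : List E, vs.length ≤ l ∧ (∀ v ∈ vs, v ∈ B) ∧ ∃ x ∈ A, r = ‖itDeriv vs f x‖}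

/-- A net `(f_ε)_{ε ∈ (0,1]}` is moderate if every seminorm grows at most
polynomially in `1/ε` as `ε → 0`. -/
def IsModerate {E : Type*} [NormedAddCommGroup E] [NormedSpace ℝ E]
    (B : Set E) (f : ℝ → E → ℂ) : Prop :=
  ∀ A : Set E, IsCompact A → ∀ l : ℕ, ∃ q : ℕ, ∃ C > (0:ℝ), ∃ ε₀ ∈ Ioc (0:ℝ) 1,
    ∀ ε ∈ Ioc (0:ℝ) 1, ε ≤ ε₀ → pSemi B A l (f ε) ≤ C * ε ^ (-(q:ℤ))

/-- A net `(f_ε)_{ε ∈ (0,1]}` is negligible if every seminorm is `O(ε^p)` for all `p`. -/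
def IsNegligible {E : Type*} [NormedAddCommGroup E] [NormedSpace ℝ E]
    (B : Set E) (f : ℝ → E → ℂ) : Prop :=
  ∀ A : Set E, IsCompact A → ∀ l : ℕ, ∀ p : ℕ, ∃ C > (0:ℝ), ∃ ε₀ ∈ Ioc (0:ℝ) 1,
    ∀ ε ∈ Ioc (0:ℝ) 1, ε ≤ ε₀ → pSemi B A l (f ε) ≤ C * ε ^ p

/-- The iterated kernels: `iterKer S H n` is the kernel `L_{n+1}` of the paper,
i.e. `L_1 = H` and `L_{n+1}(x,y) = ∫_S H(x,ξ) L_n(ξ,y) dξ` for `n ≥ 1`. -/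
noncomputable def iterKer {d : ℕ} (S : Set (Fin d → ℝ))
    (H : (Fin d → ℝ) × (Fin d → ℝ) → ℂ) : ℕ → (Fin d → ℝ) × (Fin d → ℝ) → ℂ
  | 0 => H
  | n + 1 => fun q => ∫ ξ in S, H (q.1, ξ) * iterKer S H n (ξ, q.2)

open scoped ContDiff Topology

section DirectionalDerivatives

variable {E : Type*} [NormedAddCommGroup E] [NormedSpace ℝ E]

lemma ContDiff.dirDeriv {f : E → ℂ} (hf : ContDiff ℝ ∞ f) (v : E) :
    ContDiff ℝ ∞ (dirDeriv v f) :=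
  (hf.fderiv_right (m := ∞) (by simp)).clm_apply contDiff_const

lemma dirDeriv_add (v : E) {f g : E → ℂ} (hf : ContDiff ℝ ∞ f) (hg : ContDiff ℝ ∞ g) :
    dirDeriv v (fun x => f x + g x) = fun x => dirDeriv v f x + dirDeriv v g x := by
  funext x
  simp [dirDeriv, fderiv_fun_add (hf.differentiable (by simp) x) (hg.differentiable (by simp) x)]

lemma itDeriv_add (vs : List E) {f g : E → ℂ} (hf : ContDiff ℝ ∞ f) (hg : ContDiff ℝ ∞ g) :
    itDeriv vs (fun x => f x + g x) = fun x => itDeriv vs f x + itDeriv vs g x := by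
  induction vs generalizing f g with
  | nil => rfl
  | cons v vs ih =>
    simp only [itDeriv, dirDeriv_add v hf hg]
    exact ih (hf.dirDeriv v) (hg.dirDeriv v)

lemma itDeriv_const_mul (vs : List E) (c : ℂ) {f : E → ℂ} (hf : ContDiff ℝ ∞ f) :
    itDeriv vs (fun x => c * f x) = fun x => c * itDeriv vs f x := by
  induction vs generalizing f with
  | nil => rfl
  | cons v vs ih =>
    have h : dirDeriv v (fun x => c * f x) = fun x => c * dirDeriv v f x := by
      funext x
      simp [dirDeriv, fderiv_const_mul (hf.differentiable (by simp) x)]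
    simp only [itDeriv, h]
    exact ih (hf.dirDeriv v)

lemma support_dirDeriv_subset {T : Set E} (hT : IsClosed T) {f : E → ℂ}
    (hf : Function.support f ⊆ T) (v : E) : Function.support (dirDeriv v f) ⊆ T := by
  intro x hx
  refine closure_minimal hf hT (support_fderiv_subset ℝ (f := f) ?_)
  intro h
  exact hx (by simp [dirDeriv, h])

lemma support_itDeriv_subset {T : Set E} (hT : IsClosed T) (vs : List E) {f : E → ℂ}
    (hf : Function.support f ⊆ T) : Function.support (itDeriv vs f) ⊆ T := by
  induction vs generalizing f with
  | nil => exact hf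
  | cons v vs ih => exact ih (support_dirDeriv_subset hT hf v)

/-- All derivatives of `f` of order at most `l` along directions in `B` are bounded by `M`. -/
def DerivBound (B : Set E) (l : ℕ) (M : ℝ) (f : E → ℂ) : Prop :=
  ∀ vs : List E, vs.length ≤ l → (∀ v ∈ vs, v ∈ B) → ∀ x, ‖itDeriv vs f x‖ ≤ M

namespace DerivBound

variable {B : Set E} {l : ℕ} {M N : ℝ} {f g : E → ℂ}

lemma norm_le (h : DerivBound B l M f) (x : E) : ‖f x‖ ≤ M :=
  h [] (by simp) (by simp) x

lemma nonneg (h : DerivBound B l M f) : 0 ≤ M :=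
  (norm_nonneg _).trans (h.norm_le 0)

lemma mono (h : DerivBound B l M f) {k : ℕ} (hk : k ≤ l) (hMN : M ≤ N) :
    DerivBound B k N f :=
  fun vs hvs hB x => (h vs (hvs.trans hk) hB x).trans hMN

lemma dirDeriv (h : DerivBound B (l + 1) M f) {v : E} (hv : v ∈ B) :
    DerivBound B l M (dirDeriv v f) :=
  fun vs hvs hB x => h (v :: vs) (by simpa using hvs) (by simpa [hv] using hB) x

lemma add (hf : ContDiff ℝ ∞ f) (hg : ContDiff ℝ ∞ g) (hfM : DerivBound B l M f)
    (hgN : DerivBound B l N g) : DerivBound B l (M + N) (fun x => f x + g x) := by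
  intro vs hvs hB x
  rw [itDeriv_add vs hf hg]
  exact norm_add_le_of_le (hfM vs hvs hB x) (hgN vs hvs hB x)

lemma const_mul (hf : ContDiff ℝ ∞ f) (c : ℂ) (h : DerivBound B l M f) :
    DerivBound B l (‖c‖ * M) (fun x => c * f x) := by
  intro vs hvs hB x
  rw [itDeriv_const_mul vs c hf, norm_mul]
  exact mul_le_mul_of_nonneg_left (h vs hvs hB x) (norm_nonneg c)

end DerivBound

lemma exists_derivBound {T : Set E} (hT : IsCompact T) {B : Set E} (hB : B.Finite) (l : ℕ)
    {f : E → ℂ} (hf : ContDiff ℝ ∞ f) (hfT : Function.support f ⊆ T) :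
    ∃ M, DerivBound B l M f := by
  induction l generalizing f with
  | zero =>
    obtain ⟨M, hM⟩ := hT.exists_bound_of_continuousOn hf.continuous.continuousOn
    refine ⟨max M 0, fun vs hvs _ x => ?_⟩
    obtain rfl : vs = [] := by simpa using hvs
    by_cases hx : x ∈ T
    · exact (hM x hx).trans (le_max_left _ _)
    · have : f x = 0 := by_contra fun h => hx (hfT h)
      simp [itDeriv, this]
  | succ l ih =>
    obtain ⟨M₀, hM₀⟩ := ih hf hfT
    choose M hM using fun v => ih (hf.dirDeriv v) (support_dirDeriv_subset hT.isClosed hfT v)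
    obtain ⟨M₁, hM₁⟩ := (hB.image M).bddAbove
    refine ⟨max M₀ M₁, fun vs hvs hvB x => ?_⟩
    cases vs with
    | nil => exact (hM₀.norm_le x).trans (le_max_left _ _)
    | cons v vs =>
      refine (hM v vs (by simpa using hvs) (fun w hw => hvB w (by simp [hw])) x).trans ?_
      exact (hM₁ (mem_image_of_mem M (hvB v (by simp)))).trans (le_max_right _ _)

lemma derivBound_pSemi {T : Set E} (hT : IsCompact T) {B : Set E} (hB : B.Finite) (l : ℕ)
    {f : E → ℂ} (hf : ContDiff ℝ ∞ f) (hfT : Function.support f ⊆ T) :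
    DerivBound B l (pSemi B T l f) f := by
  intro vs hvs hvB x
  by_cases hx : x ∈ T
  · obtain ⟨M, hM⟩ := exists_derivBound hT hB l hf hfT
    refine le_csSup ⟨M, ?_⟩ ⟨vs, hvs, hvB, x, hx, rfl⟩
    rintro _ ⟨ws, hws, hwB, y, -, rfl⟩
    exact hM ws hws hwB y
  · have : itDeriv vs f x = 0 :=
      by_contra fun h => hx (support_itDeriv_subset hT.isClosed vs hfT h)
    rw [this, norm_zero]
    refine Real.sSup_nonneg ?_
    rintro _ ⟨ws, -, -, y, -, rfl⟩
    exact norm_nonneg _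

lemma DerivBound.pSemi_le {B : Set E} {l : ℕ} {M : ℝ} {f : E → ℂ} (h : DerivBound B l M f)
    (A : Set E) : pSemi B A l f ≤ M := by
  refine Real.sSup_le ?_ h.nonneg
  rintro _ ⟨vs, hvs, hvB, x, -, rfl⟩
  exact h vs hvs hvB x

end DirectionalDerivatives

lemma finite_prodDirs (m n : ℕ) : (prodDirs m n).Finite := by
  refine ((finite_range fun i : Fin m =>
    ((Pi.single i (1:ℝ), 0) : (Fin m → ℝ) × (Fin n → ℝ))).union
    (finite_range fun j : Fin n => ((0, Pi.single j (1:ℝ)) : (Fin m → ℝ) × (Fin n → ℝ)))).subset ?_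
  rintro v (⟨i, rfl⟩ | ⟨j, rfl⟩)
  · exact Or.inl ⟨i, rfl⟩
  · exact Or.inr ⟨j, rfl⟩

lemma opNorm_le_of_prodDirs {m n : ℕ} (A : (Fin m → ℝ) × (Fin n → ℝ) →L[ℝ] ℂ) {M : ℝ}
    (hM : 0 ≤ M) (h : ∀ v ∈ prodDirs m n, ‖A v‖ ≤ M) : ‖A‖ ≤ (m + n) * M := by
  refine A.opNorm_le_bound (by positivity) fun z => ?_
  obtain ⟨x, y⟩ := z
  have hx : ((x, 0) : (Fin m → ℝ) × (Fin n → ℝ)) =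
      ∑ i, x i • ((Pi.single i (1:ℝ), 0) : (Fin m → ℝ) × (Fin n → ℝ)) := by
    ext j
    · simp [Prod.fst_sum, Finset.sum_apply, Pi.single_apply]
    · simp [Prod.snd_sum]
  have hy : ((0, y) : (Fin m → ℝ) × (Fin n → ℝ)) =
      ∑ i, y i • ((0, Pi.single i (1:ℝ)) : (Fin m → ℝ) × (Fin n → ℝ)) := by
    ext j
    · simp [Prod.fst_sum]
    · simp [Prod.snd_sum, Finset.sum_apply, Pi.single_apply]
  have hAx : ‖A (x, 0)‖ ≤ m * (‖(x, y)‖ * M) := by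
    rw [hx, map_sum]
    refine (norm_sum_le_of_le _ (fun i _ => ?_) : _ ≤ ∑ _i : Fin m, ‖(x, y)‖ * M).trans (by simp)
    rw [map_smul, norm_smul]
    exact mul_le_mul ((norm_le_pi_norm x i).trans (norm_fst_le (x, y)))
      (h _ (Or.inl ⟨i, rfl⟩)) (norm_nonneg _) (norm_nonneg _)
  have hAy : ‖A (0, y)‖ ≤ n * (‖(x, y)‖ * M) := by
    rw [hy, map_sum]
    refine (norm_sum_le_of_le _ (fun i _ => ?_) : _ ≤ ∑ _i : Fin n, ‖(x, y)‖ * M).trans (by simp)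
    rw [map_smul, norm_smul]
    exact mul_le_mul ((norm_le_pi_norm y i).trans (norm_snd_le (x, y)))
      (h _ (Or.inr ⟨i, rfl⟩)) (norm_nonneg _) (norm_nonneg _)
  have hxy : A (x, y) = A (x, 0) + A (0, y) := by rw [← map_add]; simp
  rw [hxy]
  refine (norm_add_le_of_le hAx hAy).trans (le_of_eq (by ring))

lemma itDeriv_tsum {m n : ℕ} {u : ℕ → ℝ} (hu : Summable u)
    (vs : List ((Fin m → ℝ) × (Fin n → ℝ))) (hvs : ∀ v ∈ vs, v ∈ prodDirs m n)
    {F : ℕ → (Fin m → ℝ) × (Fin n → ℝ) → ℂ} (hF : ∀ k, ContDiff ℝ ∞ (F k))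
    (hFu : ∀ k, DerivBound (prodDirs m n) vs.length (u k) (F k)) :
    itDeriv vs (fun x => ∑' k, F k x) = fun x => ∑' k, itDeriv vs (F k) x := by
  induction vs generalizing F with
  | nil => rfl
  | cons v vs ih =>
    have hv : v ∈ prodDirs m n := hvs v (by simp)
    have hbound : ∀ k x, ‖fderiv ℝ (F k) x‖ ≤ (m + n) * u k := fun k x =>
      opNorm_le_of_prodDirs _ (hFu k).nonneg fun w hw => hFu k [w] (by simp) (by simpa using hw) x
    have hsum : Summable fun k => ((m : ℝ) + n) * u k := hu.mul_left _
    have hderiv : dirDeriv v (fun x => ∑' k, F k x) = fun x => ∑' k, dirDeriv v (F k) x := by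
      funext x
      have h0 : Summable fun k => F k 0 :=
        Summable.of_norm_bounded hu fun k => (hFu k).norm_le 0
      have h1 : Summable fun k => fderiv ℝ (F k) x :=
        Summable.of_norm_bounded hsum fun k => hbound k x
      simp only [dirDeriv]
      rw [fderiv_tsum_apply hsum (fun k => (hF k).differentiable (by simp)) hbound h0 x]
      exact (ContinuousLinearMap.apply ℝ ℂ v).map_tsum h1
    simp only [itDeriv, hderiv]
    exact ih (fun w hw => hvs w (by simp [hw])) (fun k => (hF k).dirDeriv v)
      (fun k => (hFu k).dirDeriv hv)

section KernelComposition

variable {d : ℕ} {S : Set (Fin d → ℝ)} {f g : (Fin d → ℝ) × (Fin d → ℝ) → ℂ}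

/-- The composition `(x, y) ↦ ∫_S f(x,ξ) g(ξ,y) dξ` of two kernels. -/
noncomputable def kerComp (S : Set (Fin d → ℝ)) (f g : (Fin d → ℝ) × (Fin d → ℝ) → ℂ) :
    (Fin d → ℝ) × (Fin d → ℝ) → ℂ :=
  fun q => ∫ ξ in S, f (q.1, ξ) * g (ξ, q.2)

lemma integrableOn_kerComp (hS : IsCompact S) (hf : Continuous f) (hg : Continuous g)
    (q : (Fin d → ℝ) × (Fin d → ℝ)) :
    IntegrableOn (fun ξ => f (q.1, ξ) * g (ξ, q.2)) S :=
  (by fun_prop : Continuous fun ξ => f (q.1, ξ) * g (ξ, q.2)).continuousOn.integrableOn_compact hS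

lemma norm_kerComp_le (hS : IsCompact S) {M N : ℝ} (hf : ∀ q, ‖f q‖ ≤ M) (hg : ∀ q, ‖g q‖ ≤ N)
    (q : (Fin d → ℝ) × (Fin d → ℝ)) : ‖kerComp S f g q‖ ≤ M * N * volume.real S := by
  refine norm_setIntegral_le_of_norm_le_const hS.measure_lt_top fun ξ _ => ?_
  rw [norm_mul]
  exact mul_le_mul (hf _) (hg _) (norm_nonneg _) ((norm_nonneg _).trans (hf 0))

lemma hasFDerivAt_kerComp (hS : IsCompact S) (hf : ContDiff ℝ ∞ f) (hg : ContDiff ℝ ∞ g)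
    (q : (Fin d → ℝ) × (Fin d → ℝ)) :
    ∃ L : (Fin d → ℝ) × (Fin d → ℝ) →L[ℝ] ℂ, HasFDerivAt (kerComp S f g) L q ∧
      ∀ v, L v = kerComp S (dirDeriv (v.1, 0) f) g q + kerComp S f (dirDeriv (0, v.2) g) q := by
  let P : (Fin d → ℝ) × (Fin d → ℝ) →L[ℝ] (Fin d → ℝ) × (Fin d → ℝ) :=
    (ContinuousLinearMap.fst ℝ _ _).prod 0
  let Q : (Fin d → ℝ) × (Fin d → ℝ) →L[ℝ] (Fin d → ℝ) × (Fin d → ℝ) :=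
    ContinuousLinearMap.prod 0 (ContinuousLinearMap.snd ℝ _ _)
  let F' : (Fin d → ℝ) × (Fin d → ℝ) → (Fin d → ℝ) → (Fin d → ℝ) × (Fin d → ℝ) →L[ℝ] ℂ :=
    fun z ξ => f (z.1, ξ) • (fderiv ℝ g (ξ, z.2)).comp Q +
      g (ξ, z.2) • (fderiv ℝ f (z.1, ξ)).comp P
  have hfc := hf.continuous
  have hgc := hg.continuous
  have hf'c : Continuous (fderiv ℝ f) := hf.continuous_fderiv (by simp)
  have hg'c : Continuous (fderiv ℝ g) := hg.continuous_fderiv (by simp)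
  have hF'c : Continuous fun p : ((Fin d → ℝ) × (Fin d → ℝ)) × (Fin d → ℝ) => F' p.1 p.2 := by
    dsimp only [F']
    fun_prop
  have hdiff : ∀ z ξ, HasFDerivAt (fun z : (Fin d → ℝ) × (Fin d → ℝ) => f (z.1, ξ) * g (ξ, z.2))
      (F' z ξ) z := by
    intro z ξ
    have h1 : HasFDerivAt (fun z : (Fin d → ℝ) × (Fin d → ℝ) => (z.1, ξ)) P z := by
      exact (hasFDerivAt_fst (𝕜 := ℝ) (p := z)).prodMk (hasFDerivAt_const ξ z)
    have h2 : HasFDerivAt (fun z : (Fin d → ℝ) × (Fin d → ℝ) => (ξ, z.2)) Q z := by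
      exact (hasFDerivAt_const ξ z).prodMk (hasFDerivAt_snd (𝕜 := ℝ) (p := z))
    exact (((hf.differentiable (by simp) (z.1, ξ)).hasFDerivAt).comp z h1).mul
      (((hg.differentiable (by simp) (ξ, z.2)).hasFDerivAt).comp z h2)
  obtain ⟨C, hC⟩ := ((isCompact_closedBall q 1).prod hS).exists_bound_of_continuousOn
    hF'c.continuousOn
  have hF'q : Continuous (F' q) :=
    hF'c.comp (by fun_prop : Continuous fun ξ : (Fin d → ℝ) => (q, ξ))
  have hF'int : IntegrableOn (F' q) S := hF'q.continuousOn.integrableOn_compact hS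
  have key := hasFDerivAt_integral_of_dominated_of_fderiv_le (μ := volume.restrict S)
    (F := fun (z : (Fin d → ℝ) × (Fin d → ℝ)) ξ => f (z.1, ξ) * g (ξ, z.2)) (F' := F')
    (bound := fun _ => C) (x₀ := q) (Metric.closedBall_mem_nhds q one_pos)
    (Eventually.of_forall fun z => (integrableOn_kerComp hS hfc hgc z).aestronglyMeasurable)
    (integrableOn_kerComp hS hfc hgc q) hF'int.aestronglyMeasurable
    (ae_restrict_of_forall_mem hS.measurableSet fun ξ hξ z hz => hC (z, ξ) ⟨hz, hξ⟩)
    (integrableOn_const hS.measure_lt_top.ne)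
    (Eventually.of_forall fun ξ z _ => hdiff z ξ)
  refine ⟨_, key, fun v => ?_⟩
  rw [ContinuousLinearMap.integral_apply hF'int]
  simp only [kerComp]
  rw [← integral_add (integrableOn_kerComp hS (hf.dirDeriv _).continuous hgc q)
    (integrableOn_kerComp hS hfc (hg.dirDeriv _).continuous q)]
  refine integral_congr_ae (Eventually.of_forall fun ξ => ?_)
  simp [F', P, Q, dirDeriv]
  ring

lemma dirDeriv_kerComp (hS : IsCompact S) (hf : ContDiff ℝ ∞ f) (hg : ContDiff ℝ ∞ g)
    (v : (Fin d → ℝ) × (Fin d → ℝ)) :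
    dirDeriv v (kerComp S f g) =
      fun q => kerComp S (dirDeriv (v.1, 0) f) g q + kerComp S f (dirDeriv (0, v.2) g) q := by
  funext q
  obtain ⟨L, hL, hLv⟩ := hasFDerivAt_kerComp hS hf hg q
  rw [← hLv, dirDeriv, hL.fderiv]

lemma dirDeriv_kerComp_fst (hS : IsCompact S) (hf : ContDiff ℝ ∞ f) (hg : ContDiff ℝ ∞ g)
    (x : Fin d → ℝ) : dirDeriv (x, 0) (kerComp S f g) = kerComp S (dirDeriv (x, 0) f) g := by
  rw [dirDeriv_kerComp hS hf hg]
  funext q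
  simp [kerComp, dirDeriv, Prod.mk_zero_zero]

lemma dirDeriv_kerComp_snd (hS : IsCompact S) (hf : ContDiff ℝ ∞ f) (hg : ContDiff ℝ ∞ g)
    (y : Fin d → ℝ) : dirDeriv (0, y) (kerComp S f g) = kerComp S f (dirDeriv (0, y) g) := by
  rw [dirDeriv_kerComp hS hf hg]
  funext q
  simp [kerComp, dirDeriv, Prod.mk_zero_zero]

lemma ContDiff.kerComp (hS : IsCompact S) (hf : ContDiff ℝ ∞ f) (hg : ContDiff ℝ ∞ g) :
    ContDiff ℝ ∞ (kerComp S f g) := by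
  have hdiff : ∀ {f g : (Fin d → ℝ) × (Fin d → ℝ) → ℂ}, ContDiff ℝ ∞ f → ContDiff ℝ ∞ g →
      Differentiable ℝ (_root_.kerComp S f g) := fun hf hg q =>
    (hasFDerivAt_kerComp hS hf hg q).choose_spec.1.differentiableAt
  refine contDiff_infty.2 fun n => ?_
  induction n generalizing f g with
  | zero => exact contDiff_zero.2 (hdiff hf hg).continuous
  | succ n ih =>
    rw [Nat.cast_succ]
    refine contDiff_succ_iff_fderiv_apply.2 ⟨hdiff hf hg, fun h => absurd h (by simp), fun v => ?_⟩
    change ContDiff ℝ n (_root_.dirDeriv v (_root_.kerComp S f g))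
    rw [dirDeriv_kerComp hS hf hg v]
    exact (ih (hf.dirDeriv (v.1, 0)) hg).add (ih hf (hg.dirDeriv (0, v.2)))

lemma DerivBound.kerComp (hS : IsCompact S) {l : ℕ} {M N : ℝ} (hf : ContDiff ℝ ∞ f)
    (hg : ContDiff ℝ ∞ g) (hfM : DerivBound (prodDirs d d) l M f)
    (hgN : DerivBound (prodDirs d d) l N g) :
    DerivBound (prodDirs d d) l (M * N * volume.real S) (kerComp S f g) := by
  intro vs
  induction vs generalizing f g l with
  | nil => exact fun _ _ x => norm_kerComp_le hS hfM.norm_le hgN.norm_le x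
  | cons v vs ih =>
    intro hl hB x
    obtain ⟨k, rfl⟩ : ∃ k, l = k + 1 := Nat.exists_eq_succ_of_ne_zero (by rintro rfl; simp at hl)
    have hv : v ∈ prodDirs d d := hB v (by simp)
    have hB' : ∀ w ∈ vs, w ∈ prodDirs d d := fun w hw => hB w (by simp [hw])
    have hk : vs.length ≤ k := by simpa using hl
    simp only [itDeriv]
    rcases id hv with ⟨i, rfl⟩ | ⟨j, rfl⟩
    · rw [dirDeriv_kerComp_fst hS hf hg]
      exact ih (hf.dirDeriv _) hg (hfM.dirDeriv hv) (hgN.mono k.le_succ le_rfl) hk hB' x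
    · rw [dirDeriv_kerComp_snd hS hf hg]
      exact ih hf (hg.dirDeriv _) (hfM.mono k.le_succ le_rfl) (hgN.dirDeriv hv) hk hB' x

end KernelComposition

section IteratedKernels

variable {d : ℕ} {S : Set (Fin d → ℝ)} {H H' : (Fin d → ℝ) × (Fin d → ℝ) → ℂ}

lemma iterKer_succ (n : ℕ) : iterKer S H (n + 1) = kerComp S H (iterKer S H n) := rfl

lemma contDiff_iterKer (hS : IsCompact S) (hH : ContDiff ℝ ∞ H) (n : ℕ) :
    ContDiff ℝ ∞ (iterKer S H n) := by
  induction n with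
  | zero => exact hH
  | succ n ih => exact hH.kerComp hS ih

lemma derivBound_iterKer (hS : IsCompact S) (hH : ContDiff ℝ ∞ H) {l : ℕ} {M : ℝ}
    (hM : DerivBound (prodDirs d d) l M H) (n : ℕ) :
    DerivBound (prodDirs d d) l (M * (volume.real S * M) ^ n) (iterKer S H n) := by
  induction n with
  | zero => simpa [iterKer] using hM
  | succ n ih =>
    refine (DerivBound.kerComp hS hH (contDiff_iterKer hS hH n) hM ih).mono le_rfl (le_of_eq ?_)
    ring

lemma iterKer_succ_sub (hS : IsCompact S) (hH : ContDiff ℝ ∞ H) (hH' : ContDiff ℝ ∞ H') (n : ℕ) :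
    (fun q => iterKer S H (n + 1) q - iterKer S H' (n + 1) q) =
      fun q => kerComp S (fun q => H q - H' q) (iterKer S H n) q +
        kerComp S H' (fun q => iterKer S H n q - iterKer S H' n q) q := by
  have hL := (contDiff_iterKer hS hH n).continuous
  have hL' := (contDiff_iterKer hS hH' n).continuous
  have hHc := hH.continuous
  have hHc' := hH'.continuous
  funext q
  simp only [iterKer_succ, kerComp]
  rw [← integral_sub (integrableOn_kerComp hS hHc hL q) (integrableOn_kerComp hS hHc' hL' q),
    ← integral_add
      (integrableOn_kerComp hS (f := fun q => H q - H' q) (hHc.sub hHc') hL q)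
      (integrableOn_kerComp hS (g := fun q => iterKer S H n q - iterKer S H' n q)
        hHc' (hL.sub hL') q)]
  refine integral_congr_ae (Eventually.of_forall fun ξ => ?_)
  ring

lemma derivBound_iterKer_sub (hS : IsCompact S) (hH : ContDiff ℝ ∞ H) (hH' : ContDiff ℝ ∞ H')
    {l : ℕ} {M δ : ℝ} (hM : DerivBound (prodDirs d d) l M H)
    (hM' : DerivBound (prodDirs d d) l M H')
    (hδ : DerivBound (prodDirs d d) l δ (fun q => H q - H' q)) (n : ℕ) :
    DerivBound (prodDirs d d) l ((n + 1) * (volume.real S * M) ^ n * δ)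
      (fun q => iterKer S H n q - iterKer S H' n q) := by
  induction n with
  | zero => simpa [iterKer] using hδ
  | succ n ih =>
    have hL := contDiff_iterKer hS hH n
    have hL' := contDiff_iterKer hS hH' n
    rw [iterKer_succ_sub hS hH hH' n]
    refine (DerivBound.add ((hH.sub hH').kerComp hS hL) (hH'.kerComp hS (hL.sub hL'))
      (DerivBound.kerComp hS (hH.sub hH') hL hδ (derivBound_iterKer hS hH hM n))
      (DerivBound.kerComp hS hH' (hL.sub hL') hM' ih)).mono le_rfl (le_of_eq ?_)
    push_cast
    ring

lemma summable_iterKer (hS : IsCompact S) (hH : ContDiff ℝ ∞ H) {l : ℕ} {M : ℝ}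
    (hM : DerivBound (prodDirs d d) l M H) (q : (Fin d → ℝ) × (Fin d → ℝ)) :
    Summable fun n : ℕ => (((n + 1).factorial : ℂ))⁻¹ * iterKer S H n q := by
  refine Summable.of_norm_bounded
    ((Real.summable_pow_div_factorial (volume.real S * M)).mul_left M) fun n => ?_
  rw [norm_mul, norm_inv, Complex.norm_natCast]
  have h := (derivBound_iterKer hS hH hM n).norm_le q
  have hfac : (((n + 1).factorial : ℝ))⁻¹ ≤ ((n.factorial : ℝ))⁻¹ := by
    gcongr
    exact n.le_succ
  calc (((n + 1).factorial : ℝ))⁻¹ * ‖iterKer S H n q‖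
      ≤ ((n.factorial : ℝ))⁻¹ * (M * (volume.real S * M) ^ n) :=
        mul_le_mul hfac h (norm_nonneg _) (by positivity)
    _ = M * ((volume.real S * M) ^ n / n.factorial) := by ring

/-- The exponential kernel is locally Lipschitz in `H` with respect to each `C^l` norm. -/
lemma derivBound_expKer_sub (hS : IsCompact S) (hH : ContDiff ℝ ∞ H) (hH' : ContDiff ℝ ∞ H')
    {l : ℕ} {M δ : ℝ} (hM : DerivBound (prodDirs d d) l M H)
    (hM' : DerivBound (prodDirs d d) l M H')
    (hδ : DerivBound (prodDirs d d) l δ (fun q => H q - H' q)) :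
    DerivBound (prodDirs d d) l (Real.exp (volume.real S * M) * δ)
      (fun q => (∑' n : ℕ, (((n + 1).factorial : ℂ))⁻¹ * iterKer S H n q) -
        ∑' n : ℕ, (((n + 1).factorial : ℂ))⁻¹ * iterKer S H' n q) := by
  let F : ℕ → (Fin d → ℝ) × (Fin d → ℝ) → ℂ := fun n q =>
    (((n + 1).factorial : ℂ))⁻¹ * (iterKer S H n q - iterKer S H' n q)
  let u : ℕ → ℝ := fun n => (volume.real S * M) ^ n / n.factorial * δ
  have hsub : ∀ n, ContDiff ℝ ∞ fun q => iterKer S H n q - iterKer S H' n q := fun n =>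
    (contDiff_iterKer hS hH n).sub (contDiff_iterKer hS hH' n)
  have hF : ∀ n, ContDiff ℝ ∞ (F n) := fun n => contDiff_const.mul (hsub n)
  have hFu : ∀ n, DerivBound (prodDirs d d) l (u n) (F n) := by
    intro n
    refine ((derivBound_iterKer_sub hS hH hH' hM hM' hδ n).const_mul (hsub n) _).mono le_rfl
      (le_of_eq ?_)
    rw [norm_inv, Complex.norm_natCast, Nat.factorial_succ]
    simp only [u]
    push_cast
    have : (n.factorial : ℝ) ≠ 0 := by positivity
    field_simp
  have hu : HasSum u (Real.exp (volume.real S * M) * δ) := by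
    rw [Real.exp_eq_exp_ℝ]
    exact (NormedSpace.expSeries_div_hasSum_exp (volume.real S * M)).mul_right δ
  have htsum : (fun q => (∑' n : ℕ, (((n + 1).factorial : ℂ))⁻¹ * iterKer S H n q) -
      ∑' n : ℕ, (((n + 1).factorial : ℂ))⁻¹ * iterKer S H' n q) = fun q => ∑' n, F n q := by
    funext q
    rw [← (summable_iterKer hS hH hM q).tsum_sub (summable_iterKer hS hH' hM' q)]
    simp only [F, mul_sub]
  intro vs hvs hB x
  rw [htsum, itDeriv_tsum hu.summable vs hB hF fun n => (hFu n).mono hvs le_rfl]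
  exact tsum_of_norm_bounded hu fun n => hFu n vs hvs hB x

end IteratedKernels

lemma exp_mul_abs_log_mul_pow_le_one {a ε : ℝ} {q : ℕ} (ha : a ≤ q) (hε : ε ∈ Ioc (0:ℝ) 1) :
    Real.exp (a * |Real.log ε|) * ε ^ q ≤ 1 := by
  have hlog : Real.log ε ≤ 0 := Real.log_nonpos hε.1.le hε.2
  have hpow : ε ^ q = Real.exp (q * Real.log ε) := by
    rw [Real.exp_nat_mul, Real.exp_log hε.1]
  rw [hpow, ← Real.exp_add, Real.exp_le_one_iff, abs_of_nonpos hlog]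
  nlinarith

/-- The exponential kernel does not depend on the representative: if two logarithmic-type
nets of kernels supported in `K × K` differ by a negligible net, then the corresponding
nets of exponential kernels differ by a negligible net. -/
theorem exponential_kernel_independent_of_representative
    {d : ℕ} (S : Set (Fin d → ℝ)) (hS : IsCompact S)
    (H H' : ℝ → (Fin d → ℝ) × (Fin d → ℝ) → ℂ)
    (hsm : ∀ ε ∈ Ioc (0:ℝ) 1, ContDiff ℝ (⊤:ℕ∞) (H ε))
    (hsm' : ∀ ε ∈ Ioc (0:ℝ) 1, ContDiff ℝ (⊤:ℕ∞) (H' ε))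
    (hsupp : ∀ ε ∈ Ioc (0:ℝ) 1, Function.support (H ε) ⊆ S ×ˢ S)
    (hsupp' : ∀ ε ∈ Ioc (0:ℝ) 1, Function.support (H' ε) ⊆ S ×ˢ S)
    (hlog : ∀ A : Set ((Fin d → ℝ) × (Fin d → ℝ)), IsCompact A → ∀ l : ℕ,
      ∃ C > (0:ℝ), ∃ ε₀ ∈ Ioc (0:ℝ) 1, ∀ ε ∈ Ioc (0:ℝ) 1, ε ≤ ε₀ →
        pSemi (prodDirs d d) A l (H ε) ≤ C * |Real.log ε|)
    (hlog' : ∀ A : Set ((Fin d → ℝ) × (Fin d → ℝ)), IsCompact A → ∀ l : ℕ,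
      ∃ C > (0:ℝ), ∃ ε₀ ∈ Ioc (0:ℝ) 1, ∀ ε ∈ Ioc (0:ℝ) 1, ε ≤ ε₀ →
        pSemi (prodDirs d d) A l (H' ε) ≤ C * |Real.log ε|)
    (hdiff : IsNegligible (prodDirs d d) (fun ε q => H ε q - H' ε q))
    (Sexp Sexp' : ℝ → (Fin d → ℝ) × (Fin d → ℝ) → ℂ)
    (hSexp : ∀ ε q, Sexp ε q = ∑' n : ℕ, (((n+1).factorial : ℂ))⁻¹ * iterKer S (H ε) n q)
    (hSexp' : ∀ ε q, Sexp' ε q = ∑' n : ℕ, (((n+1).factorial : ℂ))⁻¹ * iterKer S (H' ε) n q) :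
    IsNegligible (prodDirs d d) (fun ε q => Sexp ε q - Sexp' ε q) := by
  intro A _ l p
  have hT : IsCompact (S ×ˢ S) := hS.prod hS
  have hfin := finite_prodDirs d d
  obtain ⟨C, hC, ε₁, hε₁, h₁⟩ := hlog _ hT l
  obtain ⟨C', hC', ε₂, hε₂, h₂⟩ := hlog' _ hT l
  set V := volume.real S
  obtain ⟨q, hq⟩ := exists_nat_ge (V * max C C')
  obtain ⟨D, hD, ε₃, hε₃, h₃⟩ := hdiff _ hT l (p + q)
  refine ⟨D, hD, min ε₁ (min ε₂ ε₃),
    ⟨lt_min hε₁.1 (lt_min hε₂.1 hε₃.1), (min_le_left _ _).trans hε₁.2⟩, fun ε hε hle => ?_⟩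
  simp only [le_min_iff] at hle
  have hbound : DerivBound (prodDirs d d) l (max C C' * |Real.log ε|) (H ε) :=
    (derivBound_pSemi hT hfin l (hsm ε hε) (hsupp ε hε)).mono le_rfl
      ((h₁ ε hε hle.1).trans (by gcongr; exact le_max_left _ _))
  have hbound' : DerivBound (prodDirs d d) l (max C C' * |Real.log ε|) (H' ε) :=
    (derivBound_pSemi hT hfin l (hsm' ε hε) (hsupp' ε hε)).mono le_rfl
      ((h₂ ε hε hle.2.1).trans (by gcongr; exact le_max_right _ _))
  have hsuppdiff : Function.support (fun q => H ε q - H' ε q) ⊆ S ×ˢ S :=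
    (Function.support_sub (H ε) (H' ε)).trans (union_subset (hsupp ε hε) (hsupp' ε hε))
  have hδ : DerivBound (prodDirs d d) l (D * ε ^ (p + q)) (fun q => H ε q - H' ε q) :=
    (derivBound_pSemi hT hfin l ((hsm ε hε).sub (hsm' ε hε)) hsuppdiff).mono le_rfl
      (h₃ ε hε hle.2.2)
  have hmain := (derivBound_expKer_sub hS (hsm ε hε) (hsm' ε hε) hbound hbound' hδ).pSemi_le A
  simp only [hSexp, hSexp']
  refine hmain.trans ?_
  have hexp := exp_mul_abs_log_mul_pow_le_one hq hε
  have hpos : 0 ≤ D * ε ^ p := mul_nonneg hD.le (pow_nonneg hε.1.le p)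
  calc Real.exp (V * (max C C' * |Real.log ε|)) * (D * ε ^ (p + q))
      = D * ε ^ p * (Real.exp (V * max C C' * |Real.log ε|) * ε ^ q) := by
        rw [mul_assoc V, pow_add]; ring
    _ ≤ D * ε ^ p * 1 := mul_le_mul_of_nonneg_left hexp hpos
    _ = D * ε ^ p := mul_one _
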